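/- Topological completeness of S4DS: for every bimodal formula A, A ∈ S4DS if and only if A is valid in every dense-in-itself topological space (a space with no isolated points). -/

import Mathlib

/-!
Soundness is an induction on derivations; the axiom (DS) holds because in a dense-in-itself space
every neighbourhood of `x` contains a point other than `x`.

For completeness, a non-theorem `A` is refuted on a space built from the canonical frame of S4DS,
whose points are the maximal consistent sets, with the canonical relations `R` and `RD`.
The axioms make `R` a preorder and `RD` symmetric and pseudo-transitive, give `R ⊆ RD ∪ Id`, and
(DS) yields for each `x` a `y` with both `R x y` and `RD x y` (`exists_canR_canRD`).
A point `x₀` omitting `A` is chosen, and only its class under the equivalence `RD ∪ Id` is kept.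
Distinct points of this class are `RD`-related, so `RD` differs from `≠` only at
the `RD`-reflexive points; replacing each of these by two copies (`Dup`) turns `RD` into the true
inequality relation. In the Alexandrov topology of the pulled-back `R` the two copies of a reflexive
point see each other, while an `RD`-irreflexive point has an `R`-successor different from itself, so
no singleton is open. The truth lemma (`Dup.truth`) then refutes `A` at a copy of `x₀`.
-/


/-- Bimodal formulas: propositional letters, falsum, implication, box, and
the difference modality `[≠]` (called `dbox` here). -/
inductive BForm : Type
  | var : ℕ → BForm
  | bot : BForm
  | imp : BForm → BForm → BForm
  | box : BForm → BForm
  | dbox : BForm → BForm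
  deriving DecidableEq

namespace BForm

/-- Classical negation. -/
def neg (A : BForm) : BForm := imp A bot

/-- Classical conjunction. -/
def conj (A B : BForm) : BForm := neg (imp A (neg B))

/-- `◇A = ¬□¬A`. -/
def dia (A : BForm) : BForm := neg (box (neg A))

/-- `⟨≠⟩A = ¬[≠]¬A`. -/
def ddia (A : BForm) : BForm := neg (dbox (neg A))

end BForm

/-- Truth at a point of a Kripke model over a frame `(W, R, R_D)`. -/
def ksat {W : Type} (R RD : W → W → Prop) (θ : ℕ → Set W) : W → BForm → Prop
  | x, .var n => x ∈ θ n
  | _, .bot => False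
  | x, .imp A B => ksat R RD θ x A → ksat R RD θ x B
  | x, .box A => ∀ y, R x y → ksat R RD θ y A
  | x, .dbox A => ∀ y, RD x y → ksat R RD θ y A

/-- Validity in a Kripke frame: truth at every point under every valuation. -/
def kvalid {W : Type} (R RD : W → W → Prop) (A : BForm) : Prop :=
  ∀ (θ : ℕ → Set W) (x : W), ksat R RD θ x A

/-- Truth at a point of a topological model. -/
def tsat {X : Type} [TopologicalSpace X] (θ : ℕ → Set X) : X → BForm → Prop
  | x, .var n => x ∈ θ n
  | _, .bot => False
  | x, .imp A B => tsat θ x A → tsat θ x B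
  | x, .box A => ∃ U : Set X, IsOpen U ∧ x ∈ U ∧ ∀ y ∈ U, tsat θ y A
  | x, .dbox A => ∀ y, y ≠ x → tsat θ y A

/-- Validity in a topological space. -/
def tvalid (X : Type) [TopologicalSpace X] (A : BForm) : Prop :=
  ∀ (θ : ℕ → Set X) (x : X), tsat θ x A

/-- Uniform substitution of formulas for propositional letters. -/
def substF (σ : ℕ → BForm) : BForm → BForm
  | .var n => σ n
  | .bot => .bot
  | .imp A B => .imp (substF σ A) (substF σ B)
  | .box A => .box (substF σ A)
  | .dbox A => .dbox (substF σ A)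

/-- Boolean evaluation of a formula, treating letters and modal formulas as atoms. -/
def beval (v : BForm → Bool) : BForm → Bool
  | .var n => v (.var n)
  | .bot => false
  | .imp A B => !(beval v A) || beval v B
  | .box A => v (.box A)
  | .dbox A => v (.dbox A)

/-- A classical tautology of the bimodal language. -/
def Tautology (A : BForm) : Prop := ∀ v : BForm → Bool, beval v A = true

/-- The letter `p`. -/
def pLet : BForm := .var 0
/-- The letter `q`. -/
def qLet : BForm := .var 1

/-- The least bimodal logic containing `K₂`, the S4D axioms and the extra axioms `Ax`,
closed under modus ponens, uniform substitution, and both necessitation rules. -/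
inductive Logic (Ax : Set BForm) : BForm → Prop
  | taut {A : BForm} : Tautology A → Logic Ax A
  | axKBox : Logic Ax (.imp (.box (.imp pLet qLet)) (.imp (.box pLet) (.box qLet)))
  | axKD : Logic Ax (.imp (.dbox (.imp pLet qLet)) (.imp (.dbox pLet) (.dbox qLet)))
  | axBD : Logic Ax (.imp pLet (.dbox (BForm.ddia pLet)))
  | ax4mD : Logic Ax (.imp (BForm.conj pLet (.dbox pLet)) (.dbox (.dbox pLet)))
  | axTBox : Logic Ax (.imp (.box pLet) pLet)
  | ax4Box : Logic Ax (.imp (.box pLet) (.box (.box pLet)))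
  | axDBox : Logic Ax (.imp (BForm.conj (.dbox pLet) pLet) (.box pLet))
  | extra {A : BForm} : A ∈ Ax → Logic Ax A
  | mp {A B : BForm} : Logic Ax (.imp A B) → Logic Ax A → Logic Ax B
  | subst {A : BForm} (σ : ℕ → BForm) : Logic Ax A → Logic Ax (substF σ A)
  | necBox {A : BForm} : Logic Ax A → Logic Ax (.box A)
  | necD {A : BForm} : Logic Ax A → Logic Ax (.dbox A)

/-- The axiom (DS): `[≠]p → ◇p`. -/
def dsAx : BForm := .imp (.dbox pLet) (BForm.dia pLet)

/-- The axiom (AT₁): `[≠]p → [≠]□p`. -/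
def at1Ax : BForm := .imp (.dbox pLet) (.dbox (.box pLet))

/-- The logic S4D. -/
def S4D : BForm → Prop := Logic ∅

/-- The logic S4DS = S4D + (DS). -/
def S4DS : BForm → Prop := Logic {dsAx}

/-- The logic S4DT1S = S4DS + (AT₁). -/
def S4DT1S : BForm → Prop := Logic {dsAx, at1Ax}

/-- `(W, R, R_D)` is an S4D-frame: `R` is reflexive and transitive, `R_D` is
symmetric and pseudo-transitive, and `R ⊆ R_D ∪ Id`. -/
structure IsS4DFrame {W : Type} (R RD : W → W → Prop) : Prop where
  refl : ∀ x, R x x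
  trans : ∀ ⦃x y z⦄, R x y → R y z → R x z
  symm : ∀ ⦃x y⦄, RD x y → RD y x
  ptrans : ∀ ⦃x y z⦄, RD x y → RD y z → x ≠ z → RD x z
  inc : ∀ ⦃x y⦄, R x y → RD x y ∨ x = y

/-- A T₁-frame: every `R_D`-irreflexive point is `R`-minimal. -/
def IsT1Frame {W : Type} (R RD : W → W → Prop) : Prop :=
  ∀ x, ¬ RD x x → ∀ y, R y x → y = x

/-- A DS-frame: every `R_D`-irreflexive point has an `R`-successor distinct from itself. -/
def IsDSFrame {W : Type} (R RD : W → W → Prop) : Prop :=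
  ∀ x, ¬ RD x x → ∃ y, y ≠ x ∧ R x y

/-- A cd-p-morphism from a topological space `X` onto a Kripke frame `(W, R, R_D)`. -/
structure IsCdPMorphism {X : Type} [TopologicalSpace X] {W : Type}
    (R RD : W → W → Prop) (f : X → W) : Prop where
  surj : Function.Surjective f
  cl : ∀ w : W, closure (f ⁻¹' {w}) = f ⁻¹' {v | R v w}
  diff : ∀ w : W, {x : X | ∃ y, y ≠ x ∧ f y = w} = f ⁻¹' {v | RD v w}

/-- A p-morphism between Kripke frames. -/
structure IsPMorphism {W W' : Type} (R RD : W → W → Prop) (R' RD' : W' → W' → Prop)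
    (f : W → W') : Prop where
  surj : Function.Surjective f
  forth : ∀ ⦃x y⦄, R x y → R' (f x) (f y)
  forthD : ∀ ⦃x y⦄, RD x y → RD' (f x) (f y)
  back : ∀ x z, R' (f x) z → ∃ y, R x y ∧ f y = z
  backD : ∀ x z, RD' (f x) z → ∃ y, RD x y ∧ f y = z

/-- The Alexandrov topology on `W` whose open sets are the `R`-upward-closed sets. -/
def alexandrov {W : Type} (R : W → W → Prop) : TopologicalSpace W where
  IsOpen U := ∀ ⦃x⦄, x ∈ U → ∀ ⦃y⦄, R x y → y ∈ U
  isOpen_univ := fun _ _ _ _ => trivial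
  isOpen_inter := fun _ _ hU hV x hx y hxy => ⟨hU hx.1 hxy, hV hx.2 hxy⟩
  isOpen_sUnion := fun _ hS x hx y hxy => by
    obtain ⟨U, hU, hxU⟩ := hx
    exact ⟨U, hU, hS U hU hxU hxy⟩


/-! ### Soundness -/

theorem tsat_substF {X : Type} [TopologicalSpace X] (θ : ℕ → Set X) (σ : ℕ → BForm)
    (A : BForm) (x : X) :
    tsat θ x (substF σ A) ↔ tsat (fun n => {y | tsat θ y (σ n)}) x A := by
  induction A generalizing x with
  | var n => exact Iff.rfl
  | bot => exact Iff.rfl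
  | imp A B ihA ihB => exact imp_congr (ihA x) (ihB x)
  | box A ih => simp only [substF, tsat, ih]
  | dbox A ih => simp only [substF, tsat, ih]

open Classical in
theorem beval_tsat {X : Type} [TopologicalSpace X] (θ : ℕ → Set X) (x : X) (A : BForm) :
    beval (fun B => decide (tsat θ x B)) A = true ↔ tsat θ x A := by
  induction A with
  | var n => simp [beval]
  | bot => simp [beval, tsat]
  | imp A B ihA ihB =>
    simp only [beval, tsat, ← ihA, ← ihB]
    cases beval (fun B => decide (tsat θ x B)) A <;> simp
  | box A ih => simp [beval]
  | dbox A ih => simp [beval]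

theorem s4ds_sound {A : BForm} (h : S4DS A) (X : Type) [TopologicalSpace X]
    (hX : ∀ x : X, ¬ IsOpen ({x} : Set X)) : tvalid X A := by
  induction h with
  | taut h => exact fun θ x => (beval_tsat θ x _).1 (h _)
  | axKBox =>
    rintro θ x ⟨U, hU, hxU, hU'⟩ ⟨V, hV, hxV, hV'⟩
    exact ⟨U ∩ V, hU.inter hV, ⟨hxU, hxV⟩, fun y hy => hU' y hy.1 (hV' y hy.2)⟩
  | axKD => exact fun θ x h h' y hy => h y hy (h' y hy)
  | axBD => exact fun θ x h y hy h' => h' x hy.symm h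
  | ax4mD =>
    intro θ x h y hy z hz
    by_contra hn
    refine h fun hx hd => ?_
    by_cases hzx : z = x
    · exact hn (hzx ▸ hx)
    · exact hn (hd z hzx)
  | axTBox =>
    rintro θ x ⟨U, hU, hxU, hU'⟩
    exact hU' x hxU
  | ax4Box =>
    rintro θ x ⟨U, hU, hxU, hU'⟩
    exact ⟨U, hU, hxU, fun y hy => ⟨U, hU, hy, hU'⟩⟩
  | axDBox =>
    intro θ x h
    refine ⟨Set.univ, isOpen_univ, trivial, fun y _ => ?_⟩
    by_contra hn
    refine h fun hd hx => ?_
    by_cases hyx : y = x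
    · exact hn (hyx ▸ hx)
    · exact hn (hd y hyx)
  | extra hA =>
    rw [Set.mem_singleton_iff.1 hA]
    rintro θ x hd ⟨U, hU, hxU, hU'⟩
    refine hX x ?_
    convert hU using 1
    refine Set.Subset.antisymm (Set.singleton_subset_iff.2 hxU) fun y hy => ?_
    by_contra hne
    exact hU' y hy (hd y hne)
  | mp _ _ ih ihr => exact fun θ x => ih θ x (ihr θ x)
  | subst σ _ ih => exact fun θ x => (tsat_substF θ σ _ x).2 (ih _ x)
  | necBox _ ih => exact fun θ x => ⟨Set.univ, isOpen_univ, trivial, fun y _ => ih θ y⟩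
  | necD _ ih => exact fun θ x y _ => ih θ y

/-! ### Maximal consistent sets -/

open BForm

/-- Derivability from a set of hypotheses `Γ`: closure of `Γ` and the theorems of S4DS under
modus ponens only (necessitation and substitution do not apply to hypotheses). -/
inductive Der (Γ : Set BForm) : BForm → Prop
  | thm {A : BForm} : S4DS A → Der Γ A
  | hyp {A : BForm} : A ∈ Γ → Der Γ A
  | mp {A B : BForm} : Der Γ (.imp A B) → Der Γ A → Der Γ B

theorem Der.taut {Γ : Set BForm} {A : BForm} (h : Tautology A) : Der Γ A :=
  .thm (.taut h)

theorem Der.deduction {Γ : Set BForm} {A B : BForm} (h : Der (insert A Γ) B) :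
    Der Γ (.imp A B) := by
  induction h with
  | @thm B h =>
    exact .mp (.taut (A := .imp B (.imp A B)) fun v => by
      simp only [beval]; cases beval v A <;> cases beval v B <;> rfl) (.thm h)
  | @hyp B h =>
    rcases h with rfl | h
    · exact .taut fun v => by simp only [beval]; cases beval v B <;> rfl
    · exact .mp (.taut (A := .imp B (.imp A B)) fun v => by
        simp only [beval]; cases beval v A <;> cases beval v B <;> rfl) (.hyp h)
  | @mp B C _ _ ih ihr =>
    exact .mp (.mp (.taut (A := .imp (.imp A (.imp B C)) (.imp (.imp A B) (.imp A C))) fun v => by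
      simp only [beval]
      cases beval v A <;> cases beval v B <;> cases beval v C <;> rfl) ih) ihr

theorem Der.mono {Γ Δ : Set BForm} (hΓ : Γ ⊆ Δ) {A : BForm} (h : Der Γ A) : Der Δ A := by
  induction h with
  | thm h => exact .thm h
  | hyp h => exact .hyp (hΓ h)
  | mp _ _ ih ihr => exact .mp ih ihr

/-- Derivations use finitely many hypotheses, in the form needed for Zorn's lemma. -/
theorem Der.of_sUnion {c : Set (Set BForm)} (hc : IsChain (· ⊆ ·) c) (hne : c.Nonempty)
    {A : BForm} (h : Der (⋃₀ c) A) : ∃ Γ ∈ c, Der Γ A := by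
  induction h with
  | thm h =>
    obtain ⟨Γ, hΓ⟩ := hne
    exact ⟨Γ, hΓ, .thm h⟩
  | hyp h =>
    obtain ⟨Γ, hΓ, h⟩ := h
    exact ⟨Γ, hΓ, .hyp h⟩
  | mp _ _ ih ihr =>
    obtain ⟨Γ, hΓ, h⟩ := ih
    obtain ⟨Δ, hΔ, hr⟩ := ihr
    rcases hc.total hΓ hΔ with hs | hs
    · exact ⟨Δ, hΔ, .mp (h.mono hs) hr⟩
    · exact ⟨Γ, hΓ, .mp h (hr.mono hs)⟩

/-- Maximal S4DS-consistent sets, in the form: consistent and containing every formula or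
its negation. -/
structure IsMCS (x : Set BForm) : Prop where
  cons : ¬ Der x .bot
  total : ∀ A, A ∈ x ∨ neg A ∈ x

theorem lindenbaum {Γ : Set BForm} (h : ¬ Der Γ .bot) : ∃ x, Γ ⊆ x ∧ IsMCS x := by
  obtain ⟨x, hΓx, hx⟩ := zorn_subset_nonempty {Δ : Set BForm | ¬ Der Δ .bot}
    (fun c hc hchain hne => ⟨⋃₀ c, fun hd => by
      obtain ⟨Δ, hΔ, hd⟩ := Der.of_sUnion hchain hne hd
      exact hc hΔ hd, fun s hs => Set.subset_sUnion_of_mem hs⟩) Γ h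
  have key : ∀ B, B ∉ x → Der (insert B x) .bot := fun B hB => by
    by_contra hcon
    exact hB (hx.le_of_ge hcon (Set.subset_insert B x) (Set.mem_insert B x))
  refine ⟨x, hΓx, hx.prop, fun A => ?_⟩
  by_contra hn
  rw [not_or] at hn
  exact hx.prop (.mp (key _ hn.2).deduction (key _ hn.1).deduction)

namespace IsMCS

variable {x : Set BForm}

theorem closed (hx : IsMCS x) {A : BForm} (h : Der x A) : A ∈ x :=
  (hx.total A).resolve_right fun hn => hx.cons (.mp (.hyp hn) h)

theorem thm (hx : IsMCS x) {A : BForm} (h : S4DS A) : A ∈ x := hx.closed (.thm h)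

theorem mp (hx : IsMCS x) {A B : BForm} (h : .imp A B ∈ x) (h' : A ∈ x) : B ∈ x :=
  hx.closed (.mp (.hyp h) (.hyp h'))

theorem bot_notMem (hx : IsMCS x) : BForm.bot ∉ x := fun h => hx.cons (.hyp h)

theorem mem_imp (hx : IsMCS x) {A B : BForm} : .imp A B ∈ x ↔ (A ∈ x → B ∈ x) := by
  refine ⟨hx.mp, fun h => ?_⟩
  rcases hx.total A with hA | hA
  · exact hx.closed (Der.deduction (.hyp (Or.inr (h hA))))
  · refine hx.closed (.mp (.taut (A := .imp (neg A) (.imp A B)) fun v => ?_) (.hyp hA))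
    simp only [neg, beval]
    cases beval v A <;> cases beval v B <;> rfl

theorem mem_neg (hx : IsMCS x) {A : BForm} : neg A ∈ x ↔ A ∉ x := by
  rw [neg, hx.mem_imp]
  exact imp_congr_right fun _ => iff_of_false hx.bot_notMem id

theorem mem_conj (hx : IsMCS x) {A B : BForm} : conj A B ∈ x ↔ A ∈ x ∧ B ∈ x := by
  rw [conj, hx.mem_neg, hx.mem_imp, hx.mem_neg]
  tauto

end IsMCS

theorem IsMCS.ext_of_subset {x y : Set BForm} (hx : IsMCS x) (hy : IsMCS y) (h : x ⊆ y) :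
    x = y :=
  h.antisymm fun A hA => (hx.total A).resolve_right fun hn => hy.mem_neg.1 (h hn) hA

/-! ### Instances of the axioms -/

/-- The substitution `p ↦ A`, `q ↦ B`. -/
def sub2 (A B : BForm) : ℕ → BForm
  | 0 => A
  | _ + 1 => B

section Axioms

variable (A B : BForm)

theorem s4ds_KBox : S4DS (.imp (.box (.imp A B)) (.imp (.box A) (.box B))) :=
  Logic.subst (sub2 A B) Logic.axKBox

theorem s4ds_KD : S4DS (.imp (.dbox (.imp A B)) (.imp (.dbox A) (.dbox B))) :=
  Logic.subst (sub2 A B) Logic.axKD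

theorem s4ds_BD : S4DS (.imp A (.dbox (ddia A))) := Logic.subst (sub2 A A) Logic.axBD

theorem s4ds_4mD : S4DS (.imp (conj A (.dbox A)) (.dbox (.dbox A))) :=
  Logic.subst (sub2 A A) Logic.ax4mD

theorem s4ds_TBox : S4DS (.imp (.box A) A) := Logic.subst (sub2 A A) Logic.axTBox

theorem s4ds_4Box : S4DS (.imp (.box A) (.box (.box A))) := Logic.subst (sub2 A A) Logic.ax4Box

theorem s4ds_DBox : S4DS (.imp (conj (.dbox A) A) (.box A)) := Logic.subst (sub2 A A) Logic.axDBox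

theorem s4ds_DS : S4DS (.imp (.dbox A) (dia A)) :=
  Logic.subst (A := dsAx) (sub2 A A) (Logic.extra (Set.mem_singleton dsAx))

end Axioms

/-! ### The canonical frame -/

/-- The canonical accessibility relation of `□`. -/
def canR (x y : Set BForm) : Prop := ∀ A, .box A ∈ x → A ∈ y

/-- The canonical accessibility relation of `[≠]`. -/
def canRD (x y : Set BForm) : Prop := ∀ A, .dbox A ∈ x → A ∈ y

section Canonical

variable {x y z : Set BForm}

theorem box_mem_of_der (hx : IsMCS x) {A : BForm} (h : Der {B | .box B ∈ x} A) : .box A ∈ x := by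
  induction h with
  | thm h => exact hx.thm (Logic.necBox h)
  | hyp h => exact h
  | mp _ _ ih ihr => exact hx.mp (hx.mp (hx.thm (s4ds_KBox _ _)) ih) ihr

theorem dbox_mem_of_der (hx : IsMCS x) {A : BForm} (h : Der {B | .dbox B ∈ x} A) :
    .dbox A ∈ x := by
  induction h with
  | thm h => exact hx.thm (Logic.necD h)
  | hyp h => exact h
  | mp _ _ ih ihr => exact hx.mp (hx.mp (hx.thm (s4ds_KD _ _)) ih) ihr

/-- A set from which `A` is not derivable extends to a maximal consistent set omitting `A`. -/
theorem exists_mcs_notMem {Γ : Set BForm} {A : BForm} (h : ¬ Der Γ A) :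
    ∃ y, IsMCS y ∧ Γ ⊆ y ∧ A ∉ y := by
  obtain ⟨y, hy, hmcs⟩ := lindenbaum (Γ := insert (neg A) Γ) fun hd => h <| by
    refine .mp (.taut (A := .imp (neg (neg A)) A) fun v => ?_) hd.deduction
    simp only [neg, beval]
    cases beval v A <;> rfl
  exact ⟨y, hmcs, fun B hB => hy (Or.inr hB), hmcs.mem_neg.1 (hy (Or.inl rfl))⟩

theorem exists_canR (hx : IsMCS x) {A : BForm} (h : .box A ∉ x) :
    ∃ y, IsMCS y ∧ canR x y ∧ A ∉ y :=
  exists_mcs_notMem fun hd => h (box_mem_of_der hx hd)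

theorem exists_canRD (hx : IsMCS x) {A : BForm} (h : .dbox A ∉ x) :
    ∃ y, IsMCS y ∧ canRD x y ∧ A ∉ y :=
  exists_mcs_notMem fun hd => h (dbox_mem_of_der hx hd)

theorem canR_refl (hx : IsMCS x) : canR x x := fun A h => hx.mp (hx.thm (s4ds_TBox A)) h

theorem canR_trans (hx : IsMCS x) (h : canR x y) (h' : canR y z) : canR x z :=
  fun A hA => h' A (h _ (hx.mp (hx.thm (s4ds_4Box A)) hA))

theorem dbox_mem_of_taut (hx : IsMCS x) {A B : BForm} (h : Tautology (.imp A B))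
    (hA : .dbox A ∈ x) : .dbox B ∈ x :=
  dbox_mem_of_der hx (.mp (.taut h) (.hyp hA))

theorem canRD_symm (hx : IsMCS x) (hy : IsMCS y) (h : canRD x y) : canRD y x := by
  intro A hA
  by_contra hn
  have h1 : ddia (neg A) ∈ y := h _ (hx.mp (hx.thm (s4ds_BD _)) (hx.mem_neg.2 hn))
  refine hy.mem_neg.1 h1 (dbox_mem_of_taut hy (fun v => ?_) hA)
  simp only [neg, beval]
  cases beval v A <;> rfl

/-- If `x ≠ z`, each `A ∉ z` has a weakening `C` (a disjunction `A ∨ B` with `B ∈ x \ z`) that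
belongs to `x` and still fails in `z`; this is how the axioms see that `x ≠ z`. -/
theorem exists_weakening (hx : IsMCS x) (hz : IsMCS z) (hne : x ≠ z) {A : BForm}
    (hd : .dbox A ∈ x) (hA : A ∉ z) : ∃ C, C ∈ x ∧ .dbox C ∈ x ∧ C ∉ z := by
  obtain ⟨B, hBx, hBz⟩ : ∃ B ∈ x, B ∉ z := by
    by_contra! hall
    exact hne (hx.ext_of_subset hz hall)
  refine ⟨.imp (neg A) B, hx.mem_imp.2 fun _ => hBx, dbox_mem_of_taut hx (fun v => ?_) hd,
    fun h => hBz (hz.mp h (hz.mem_neg.2 hA))⟩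
  simp only [neg, beval]
  cases beval v A <;> cases beval v B <;> rfl

theorem canRD_ptrans (hx : IsMCS x) (hz : IsMCS z) (h : canRD x y) (h' : canRD y z)
    (hne : x ≠ z) : canRD x z := by
  intro A hA
  by_contra hn
  obtain ⟨C, hC, hdC, hCz⟩ := exists_weakening hx hz hne hA hn
  exact hCz (h' _ (h _ (hx.mp (hx.thm (s4ds_4mD C)) (hx.mem_conj.2 ⟨hC, hdC⟩))))

theorem canRD_of_canR (hx : IsMCS x) (hz : IsMCS z) (h : canR x z) (hne : x ≠ z) :
    canRD x z := by
  intro A hA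
  by_contra hn
  obtain ⟨C, hC, hdC, hCz⟩ := exists_weakening hx hz hne hA hn
  exact hCz (h _ (hx.mp (hx.thm (s4ds_DBox C)) (hx.mem_conj.2 ⟨hdC, hC⟩)))

/-- Canonicity of (DS): every point has a successor along both relations at once. -/
theorem exists_canR_canRD (hx : IsMCS x) : ∃ y, IsMCS y ∧ canR x y ∧ canRD x y := by
  -- Whatever follows from the `□`- and `[≠]`-parts of `x` together follows, under `□`, from one `A`.
  have key : ∀ C, Der ({B | .box B ∈ x} ∪ {B | .dbox B ∈ x}) C →
      ∃ A, .dbox A ∈ x ∧ .box (.imp A C) ∈ x := by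
    intro C h
    induction h with
    | @thm C h =>
      refine ⟨.imp .bot .bot, hx.thm (.necD (.taut fun v => rfl)), box_mem_of_der hx ?_⟩
      exact Der.deduction (.thm h)
    | @hyp C h =>
      rcases h with h | h
      · refine ⟨.imp .bot .bot, hx.thm (.necD (.taut fun v => rfl)), box_mem_of_der hx ?_⟩
        exact Der.deduction (.hyp (Or.inr h))
      · exact ⟨C, h, box_mem_of_der hx (Der.deduction (.hyp (Or.inl rfl)))⟩
    | @mp C D _ _ ih ihr =>
      obtain ⟨A, hA, h⟩ := ih
      obtain ⟨B, hB, h'⟩ := ihr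
      refine ⟨conj A B, dbox_mem_of_der hx ?_, box_mem_of_der hx ?_⟩
      · refine .mp (.mp (.taut (A := .imp A (.imp B (conj A B))) fun v => ?_) (.hyp hA)) (.hyp hB)
        simp only [conj, neg, beval]
        cases beval v A <;> cases beval v B <;> rfl
      · refine .mp (.mp (.taut (A := .imp (.imp A (.imp C D)) (.imp (.imp B C)
          (.imp (conj A B) D))) fun v => ?_) (.hyp h)) (.hyp h')
        simp only [conj, neg, beval]
        cases beval v A <;> cases beval v B <;> cases beval v C <;> cases beval v D <;> rfl
  obtain ⟨y, hy, hmcs⟩ := lindenbaum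
      (Γ := {B | .box B ∈ x} ∪ {B | .dbox B ∈ x}) fun hd => by
    obtain ⟨A, hA, h⟩ := key _ hd
    exact hx.mem_neg.1 (hx.mp (hx.thm (s4ds_DS A)) hA) h
  exact ⟨y, hmcs, fun A hA => hy (Or.inl hA), fun A hA => hy (Or.inr hA)⟩

end Canonical

/-! ### The dense-in-itself space -/

/-- Points: pairs of a maximal consistent set in the `RD ∪ Id`-class of `x₀` and a copy index.
An `RD`-irreflexive set has the single copy `false`; an `RD`-reflexive one has two copies. -/
def Dup (x₀ : Set BForm) : Type :=
  {p : Set BForm × Bool // IsMCS p.1 ∧ (x₀ = p.1 ∨ canRD x₀ p.1) ∧ (p.2 = true → canRD p.1 p.1)}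

namespace Dup

variable {x₀ : Set BForm}

/-- The canonical relation `R` pulled back along the projection to maximal consistent sets. -/
def rel (a b : Dup x₀) : Prop := canR a.1.1 b.1.1

instance : TopologicalSpace (Dup x₀) := alexandrov rel

theorem isOpen_def {U : Set (Dup x₀)} :
    IsOpen U ↔ ∀ ⦃a⦄, a ∈ U → ∀ ⦃b⦄, rel a b → b ∈ U := Iff.rfl

/-- The class of `x₀` is closed under `RD`. -/
theorem mem_class (h₀ : IsMCS x₀) (a : Dup x₀) {y : Set BForm} (hy : IsMCS y)
    (h : canRD a.1.1 y) : x₀ = y ∨ canRD x₀ y := by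
  by_cases hne : x₀ = y
  · exact Or.inl hne
  · rcases a.2.2.1 with ha | ha
    · exact Or.inr (ha ▸ h)
    · exact Or.inr (canRD_ptrans h₀ hy ha h hne)

/-- Distinct points lie over `RD`-related maximal consistent sets. -/
theorem canRD_of_ne (h₀ : IsMCS x₀) {a b : Dup x₀} (hne : b ≠ a) : canRD a.1.1 b.1.1 := by
  by_cases heq : a.1.1 = b.1.1
  · -- Two copies of one set: one of them has index `true`, so the set is `RD`-reflexive.
    rw [← heq]
    cases ha : a.1.2 with
    | true => exact a.2.2.2 ha
    | false =>
      cases hb : b.1.2 with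
      | true => exact heq ▸ b.2.2.2 hb
      | false => exact (hne (Subtype.ext (Prod.ext heq.symm (hb.trans ha.symm)))).elim
  · rcases a.2.2.1 with ha | ha
    · exact ha ▸ b.2.2.1.resolve_left fun hb => heq (ha.symm.trans hb)
    · have hax := canRD_symm h₀ a.2.1 ha
      rcases b.2.2.1 with hb | hb
      · exact hb ▸ hax
      · exact canRD_ptrans a.2.1 b.2.1 hax hb heq

/-- Conversely, every `RD`-successor is realized by a point different from `a`. -/
theorem exists_ne_of_canRD (h₀ : IsMCS x₀) (a : Dup x₀) {y : Set BForm} (hy : IsMCS y)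
    (h : canRD a.1.1 y) : ∃ b : Dup x₀, b ≠ a ∧ b.1.1 = y := by
  by_cases heq : a.1.1 = y
  · subst heq
    refine ⟨⟨(a.1.1, !a.1.2), hy, a.2.2.1, fun _ => h⟩, fun hb => ?_, rfl⟩
    have := congrArg (fun c : Dup x₀ => c.1.2) hb
    simp at this
  · exact ⟨⟨(y, false), hy, mem_class h₀ a hy h, fun h => by cases h⟩,
      fun hb => heq (by rw [← hb]), rfl⟩

theorem not_isOpen_singleton (h₀ : IsMCS x₀) (a : Dup x₀) : ¬ IsOpen ({a} : Set (Dup x₀)) := by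
  intro ho
  obtain ⟨y, hy, hR, hRD⟩ := exists_canR_canRD a.2.1
  obtain ⟨b, hne, rfl⟩ := exists_ne_of_canRD h₀ a hy hRD
  exact hne (isOpen_def.1 ho rfl hR)

theorem truth (h₀ : IsMCS x₀) (A : BForm) (a : Dup x₀) :
    tsat (fun n => {b : Dup x₀ | .var n ∈ b.1.1}) a A ↔ A ∈ a.1.1 := by
  induction A generalizing a with
  | var n => exact Iff.rfl
  | bot => exact iff_of_false id a.2.1.bot_notMem
  | imp A B ihA ihB => exact (imp_congr (ihA a) (ihB a)).trans a.2.1.mem_imp.symm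
  | box A ih =>
    constructor
    · rintro ⟨U, hU, haU, h⟩
      by_contra hn
      obtain ⟨y, hy, hR, hA⟩ := exists_canR a.2.1 hn
      by_cases heq : a.1.1 = y
      · exact hA (heq ▸ (ih a).1 (h a haU))
      · obtain ⟨b, -, rfl⟩ := exists_ne_of_canRD h₀ a hy (canRD_of_canR a.2.1 hy hR heq)
        exact hA ((ih b).1 (h b (isOpen_def.1 hU haU hR)))
    · intro h
      refine ⟨{b | rel a b}, ?_, canR_refl a.2.1, fun b hb => (ih b).2 (hb A h)⟩
      exact isOpen_def.2 fun b hb c hc => canR_trans a.2.1 hb hc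
  | dbox A ih =>
    constructor
    · intro h
      by_contra hn
      obtain ⟨y, hy, hRD, hA⟩ := exists_canRD a.2.1 hn
      obtain ⟨b, hne, rfl⟩ := exists_ne_of_canRD h₀ a hy hRD
      exact hA ((ih b).1 (h b hne))
    · exact fun h b hb => (ih b).2 (canRD_of_ne h₀ hb A h)

end Dup

theorem s4ds_of_der_empty {A : BForm} (h : Der ∅ A) : S4DS A := by
  induction h with
  | thm h => exact h
  | hyp h => exact h.elim
  | mp _ _ ih ihr => exact Logic.mp ih ihr

/-- topological completeness of S4DS: `A ∈ S4DS` iff `A` is valid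
in every dense-in-itself topological space. -/
theorem s4ds_topological_completeness (A : BForm) :
    S4DS A ↔ ∀ (X : Type) [TopologicalSpace X],
      (∀ x : X, ¬ IsOpen ({x} : Set X)) → tvalid X A := by
  refine ⟨fun h X _ hX => s4ds_sound h X hX, fun h => ?_⟩
  by_contra hn
  obtain ⟨x₀, h₀, -, hA⟩ := exists_mcs_notMem fun hd => hn (s4ds_of_der_empty hd)
  let a : Dup x₀ := ⟨(x₀, false), h₀, Or.inl rfl, fun h => by cases h⟩
  exact hA ((Dup.truth h₀ A a).1 (h (Dup x₀) (Dup.not_isOpen_singleton h₀) _ a))
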